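/- For every n ≥ 2, the ℚ-linear span of {t_σ : σ ∈ Sₙ} inside Inv(sl₂^{⊗n}) has dimension (n−2)! if and only if n ≤ 5. (Equivalently, the homotopy sl₂ weight system W^h_n, defined on the (n−2)!-dimensional space 𝒞ₙ of connected trees with legs labeled bijectively by {1,…,n}, is injective if and only if n ≤ 5.) -/

import Mathlib

/- The homotopy sl₂ weight system on connected trees is injective iff n ≤ 5:
   for every n ≥ 2, the ℚ-span of the tensors t_σ (σ ∈ Sₙ), the κ-duals of the
   permuted iterated-bracket forms κ^{⊗n}(t_σ, x₁⊗⋯⊗xₙ) =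
   κ([[⋯[x_{σ(1)},x_{σ(2)}],⋯],x_{σ(n−1)}], x_{σ(n)}), has dimension (n−2)!
   if and only if n ≤ 5.  κ and the family t are quantified via their
   defining properties. -/

open scoped TensorProduct

set_option synthInstance.maxHeartbeats 1000000
set_option maxHeartbeats 1000000

noncomputable section

abbrev sl2 : Type := ↥(LieAlgebra.SpecialLinear.sl (Fin 2) ℚ)

def H : sl2 :=
  ⟨!![1, 0; 0, -1], show _ ∈ LinearMap.ker (Matrix.traceLinearMap (Fin 2) ℚ ℚ) from
    LinearMap.mem_ker.2 (by simp [Matrix.trace_fin_two])⟩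

def E : sl2 :=
  ⟨!![0, 1; 0, 0], show _ ∈ LinearMap.ker (Matrix.traceLinearMap (Fin 2) ℚ ℚ) from
    LinearMap.mem_ker.2 (by simp [Matrix.trace_fin_two])⟩

def F : sl2 :=
  ⟨!![0, 0; 1, 0], show _ ∈ LinearMap.ker (Matrix.traceLinearMap (Fin 2) ℚ ℚ) from
    LinearMap.mem_ker.2 (by simp [Matrix.trace_fin_two])⟩

/-- The n-fold tensor power sl₂^{⊗n}. -/
abbrev TP (n : ℕ) : Type := ⨂[ℚ] (_ : Fin n), sl2

/-- The adjoint action of `x ∈ sl₂` on `sl₂^{⊗n}`, extended as a derivation. -/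
def actOn (n : ℕ) (x : sl2) : TP n →ₗ[ℚ] TP n :=
  ∑ i : Fin n,
    PiTensorProduct.map (fun j => if j = i then LieAlgebra.ad ℚ sl2 x else LinearMap.id)

/-- The space of invariant tensors of `sl₂^{⊗n}`. -/
def Invariants (n : ℕ) : Submodule ℚ (TP n) :=
  ⨅ x : sl2, LinearMap.ker (actOn n x)

/-- Pairing of `sl₂^{⊗n}` against `x₁ ⊗ ⋯ ⊗ xₙ` via `κ^{⊗n}`:
on pure tensors, `pairT κ n x (a₁ ⊗ ⋯ ⊗ aₙ) = ∏ i, κ(aᵢ, xᵢ)`. -/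
def pairT (κ : sl2 →ₗ[ℚ] sl2 →ₗ[ℚ] ℚ) (n : ℕ) (x : Fin n → sl2) : TP n →ₗ[ℚ] ℚ :=
  PiTensorProduct.lift
    ((MultilinearMap.mkPiAlgebra ℚ (Fin n) ℚ).compLinearMap fun i => κ.flip (x i))

/-- Left-iterated Lie bracket of a list: `[[⋯[a₁,a₂],⋯],a_k]`. -/
def lBrk : List sl2 → sl2
  | [] => 0
  | a :: l => l.foldl (fun y z => ⁅y, z⁆) a

/-- `κ([[⋯[x₁,x₂],⋯],x_{k-1}], x_k)`, read as `κ(x₁,x₂)` when `k = 2`. -/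
def brkVal (κ : sl2 →ₗ[ℚ] sl2 →ₗ[ℚ] ℚ) {k : ℕ} (x : Fin k → sl2) : ℚ :=
  κ (lBrk (List.ofFn x).dropLast) ((List.ofFn x).getLastD 0)

/-!
By the Jacobi identity and the invariance of `κ`, every linear tree is a combination of the
`(n - 2)!` linear trees whose end legs are `1` and `n`. So the dimension is `(n - 2)!` exactly when
these are linearly independent as multilinear forms. With more than `3 = dim sl₂` inner legs, the
signed sum over all orders of the inner legs is alternating in these legs, hence zero. With at most
three inner legs, evaluating a linear relation on the standard triple `h, e, f` isolates its
coefficients.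
-/

open Equiv (Perm)
open Module (End finrank)
open Submodule (span subset_span span_le)

section IteratedLie

variable (R : Type*) {L L₂ : Type*} [CommRing R] [LieRing L] [LieAlgebra R L]
  [LieRing L₂] [LieAlgebra R L₂]

/-- The operator `y ↦ ⁅y, z⁆`, valued in the opposite algebra because a left-normed bracket applies
the operators of its letters from left to right. -/
def rightAd : L →ₗ[R] (End R L)ᵐᵒᵖ :=
  (MulOpposite.opLinearEquiv R).toLinearMap ∘ₗ (-(LieAlgebra.ad R L : L →ₗ[R] End R L))

/-- The left-normed bracket `y ↦ ⁅⋯⁅⁅y, z₁⁆, z₂⁆, ⋯, zₖ⁆` along a list, as a linear operator. -/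
def iteratedLie (l : List L) : End R L :=
  (l.map (rightAd R)).prod.unop

@[simp]
lemma iteratedLie_nil (y : L) : iteratedLie R [] y = y := rfl

@[simp]
lemma iteratedLie_cons (z : L) (l : List L) (y : L) :
    iteratedLie R (z :: l) y = iteratedLie R l ⁅y, z⁆ := by
  rw [← lie_skew]
  simp only [iteratedLie, rightAd, List.map_cons, List.prod_cons, MulOpposite.unop_mul]
  rfl

lemma iteratedLie_append (l l' : List L) (y : L) :
    iteratedLie R (l ++ l') y = iteratedLie R l' (iteratedLie R l y) := by
  simp [iteratedLie]

lemma iteratedLie_eq_foldl (l : List L) (y : L) :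
    iteratedLie R l y = l.foldl (fun a z => ⁅a, z⁆) y := by
  induction l generalizing y with
  | nil => rfl
  | cons z l ih => rw [iteratedLie_cons, ih, List.foldl_cons]

lemma map_iteratedLie (φ : L →ₗ⁅R⁆ L₂) (l : List L) (y : L) :
    φ (iteratedLie R l y) = iteratedLie R (l.map φ) (φ y) := by
  induction l generalizing y with
  | nil => rfl
  | cons z l ih => simp [ih]

/-- The span of the left-normed brackets that start with `y` and continue with the letters of `s`
in an arbitrary order. -/
def bracketSpan (y : L) (s : List L) : Submodule R L :=
  span R {iteratedLie R l y | (l : List L) (_ : l.Perm s)}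

variable {R} {y a : L} {s s' l : List L}

lemma iteratedLie_mem_bracketSpan (h : l.Perm s) : iteratedLie R l y ∈ bracketSpan R y s :=
  subset_span ⟨l, h, rfl⟩

lemma iteratedLie_apply_mem_bracketSpan {f : L} (hf : f ∈ bracketSpan R y s)
    (h : (s ++ l).Perm s') : iteratedLie R l f ∈ bracketSpan R y s' := by
  refine (span_le (p := (bracketSpan R y s').comap (iteratedLie R l))).2 ?_ hf
  rintro _ ⟨l', hl', rfl⟩
  simpa [iteratedLie_append] using
    iteratedLie_mem_bracketSpan (R := R) (y := y) ((hl'.append_right l).trans h)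

lemma bracketSpan_lie_le {j : L} (h : (j :: s).Perm s') :
    bracketSpan R ⁅y, j⁆ s ≤ bracketSpan R y s' := by
  refine span_le.2 ?_
  rintro _ ⟨l, hl, rfl⟩
  simpa using iteratedLie_mem_bracketSpan (R := R) (y := y) ((hl.cons j).trans h)

/- The Jacobi identity `⁅y, ⁅w, j⁆⁆ = ⁅⁅y, w⁆, j⁆ - ⁅⁅y, j⁆, w⁆` pulls the letters of the right
argument out one at a time. -/
lemma lie_iteratedLie_mem_bracketSpan (y a : L) (l : List L) :
    ⁅y, iteratedLie R l a⁆ ∈ bracketSpan R y (a :: l) := by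
  induction l using List.reverseRecOn generalizing y with
  | nil => simpa using iteratedLie_mem_bracketSpan (R := R) (y := y) (.refl [a])
  | append_singleton l j ih =>
    set w := iteratedLie R l a
    have jacobi : ⁅y, iteratedLie R (l ++ [j]) a⁆ = iteratedLie R [j] ⁅y, w⁆ - ⁅⁅y, j⁆, w⁆ := by
      simp only [iteratedLie_append, iteratedLie_cons, iteratedLie_nil, w]
      rw [leibniz_lie, ← lie_skew _ ⁅y, j⁆, sub_eq_add_neg]
    rw [jacobi]
    exact sub_mem (iteratedLie_apply_mem_bracketSpan (ih y) (.refl _))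
      (bracketSpan_lie_le (List.perm_append_singleton j (a :: l)).symm (ih ⁅y, j⁆))

lemma iteratedLie_mem_bracketSpan_of_perm_cons (h : (a :: s).Perm (y :: l)) :
    iteratedLie R l y ∈ bracketSpan R a s := by
  obtain rfl | ha := List.mem_cons.1 (h.subset List.mem_cons_self)
  · exact iteratedLie_mem_bracketSpan h.cons_inv.symm
  obtain ⟨u, r, rfl⟩ := List.append_of_mem ha
  have hs : (y :: u ++ r).Perm s :=
    (h.trans (List.perm_middle (l₁ := y :: u))).cons_inv.symm
  have move_front : iteratedLie R (u ++ a :: r) y =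
      -iteratedLie R r ⁅a, iteratedLie R u y⁆ := by
    rw [iteratedLie_append, iteratedLie_cons, ← lie_skew, map_neg]
  rw [move_front]
  exact neg_mem (iteratedLie_apply_mem_bracketSpan (lie_iteratedLie_mem_bracketSpan a y u) hs)

lemma bracketSpan_le_of_perm_cons (h : (a :: s).Perm (y :: l)) :
    bracketSpan R y l ≤ bracketSpan R a s := by
  refine span_le.2 ?_
  rintro _ ⟨l', hl', rfl⟩
  exact iteratedLie_mem_bracketSpan_of_perm_cons (h.trans (hl'.symm.cons y))

end IteratedLie

section LinearTree

variable {R L M : Type*} [CommRing R] [LieRing L] [LieAlgebra R L] [AddCommGroup M] [Module R M]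

/-- Symmetric invariant bilinear maps on a Lie algebra. The values lie in a module so that the
notion applies to families of invariant forms. -/
structure IsSymmInvariant (κ : L →ₗ[R] L →ₗ[R] M) : Prop where
  symm : ∀ x y, κ x y = κ y x
  lie_left : ∀ x y z, κ ⁅x, y⁆ z = κ x ⁅y, z⁆

/-- The value `κ(⁅⋯⁅x₀, x₁⁆, ⋯, xₘ⁆, xₘ₊₁)` of the linear tree with legs `0, …, m + 1`. -/
def linearTree (κ : L →ₗ[R] L →ₗ[R] M) {m : ℕ} (x : Fin (m + 2) → L) : M :=
  κ (iteratedLie R (List.ofFn fun i : Fin m => x i.castSucc.succ) (x 0)) (x (Fin.last (m + 1)))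

/-- The span of the linear trees with end legs `a` and `b` and the letters of `s` in between, in an
arbitrary order. -/
def treeSpan (κ : L →ₗ[R] L →ₗ[R] M) (a b : L) (s : List L) : Submodule R M :=
  (bracketSpan R a s).map (κ.flip b)

variable {κ : L →ₗ[R] L →ₗ[R] M}

lemma IsSymmInvariant.iteratedLie_left (hκ : IsSymmInvariant κ) (l : List L) (y z : L) :
    κ (iteratedLie R l y) z = (-1 : R) ^ l.length • κ (iteratedLie R l.reverse z) y := by
  induction l generalizing y with
  | nil => simp [hκ.symm y]
  | cons a l ih =>
    rw [iteratedLie_cons, ih, hκ.symm, hκ.lie_left, ← lie_skew, map_neg, hκ.symm y]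
    simp [iteratedLie_append, pow_succ]

lemma IsSymmInvariant.treeSpan_swap_le (hκ : IsSymmInvariant κ) (a b : L) (s : List L) :
    treeSpan κ a b s ≤ treeSpan κ b a s := by
  rw [treeSpan, bracketSpan, Submodule.map_span, span_le]
  rintro _ ⟨_, ⟨l, hl, rfl⟩, rfl⟩
  rw [LinearMap.flip_apply, hκ.iteratedLie_left]
  exact Submodule.smul_mem _ _ <|
    Submodule.mem_map_of_mem (iteratedLie_mem_bracketSpan (l.reverse_perm.trans hl))

lemma IsSymmInvariant.treeSpan_le_of_perm (hκ : IsSymmInvariant κ) {a b y z : L} {s l : List L}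
    (h : (a :: b :: s).Perm (y :: z :: l)) : treeSpan κ y z l ≤ treeSpan κ a b s := by
  replace h : (b :: a :: s).Perm (z :: y :: l) := (List.Perm.swap ..).trans (h.trans (.swap ..))
  obtain rfl | hb := List.mem_cons.1 (h.subset List.mem_cons_self)
  · exact Submodule.map_mono (bracketSpan_le_of_perm_cons h.cons_inv)
  obtain ⟨u, v, huv⟩ := List.append_of_mem hb
  have hyl : (b :: (u ++ v)).Perm (y :: l) := huv ▸ List.perm_middle.symm
  have has : (a :: s).Perm (z :: (u ++ v)) :=
    (h.trans ((hyl.symm.cons z).trans (.swap ..))).cons_inv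
  calc treeSpan κ y z l
    _ ≤ treeSpan κ b z (u ++ v) := Submodule.map_mono (bracketSpan_le_of_perm_cons hyl)
    _ ≤ treeSpan κ z b (u ++ v) := hκ.treeSpan_swap_le ..
    _ ≤ treeSpan κ a b s := Submodule.map_mono (bracketSpan_le_of_perm_cons has)

lemma exists_perm_eq_comp_of_ofFn_perm {α : Type*} {m : ℕ} {f g : Fin m → α}
    (h : (List.ofFn g).Perm (List.ofFn f)) : ∃ p : Perm (Fin m), g = f ∘ p := by
  classical
  let p : Fin m → Fin m := Fin.cast (by simp) ∘ h.idxBij ∘ Fin.cast (by simp)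
  have hp : Function.Injective p :=
    (Fin.cast_injective _).comp (h.idxBij_injective.comp (Fin.cast_injective _))
  refine ⟨Equiv.ofBijective p (Finite.injective_iff_bijective.1 hp), funext fun i => ?_⟩
  have hi := h.getElem_idxBij_eq_getElem (i.cast (by simp))
  rw [List.getElem_ofFn, List.getElem_ofFn] at hi
  exact hi.symm

lemma ofFn_perm_ends_cons {α : Type*} {m : ℕ} (x : Fin (m + 2) → α) :
    (List.ofFn x).Perm
      (x 0 :: x (Fin.last (m + 1)) :: List.ofFn fun i : Fin m => x i.castSucc.succ) := by
  rw [List.ofFn_succ, List.ofFn_succ', List.concat_eq_append]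
  exact (List.perm_append_singleton _ _).cons _

/-- The extension of a permutation of the inner legs to all legs that fixes both end legs. -/
def fixEnds {m : ℕ} (p : Perm (Fin m)) : Perm (Fin (m + 2)) :=
  p.viaFintypeEmbedding (Fin.castSuccEmb.trans (Fin.succEmb (m + 1)))

@[simp]
lemma fixEnds_castSucc_succ {m : ℕ} (p : Perm (Fin m)) (i : Fin m) :
    fixEnds p i.castSucc.succ = (p i).castSucc.succ :=
  p.viaFintypeEmbedding_apply_image (Fin.castSuccEmb.trans (Fin.succEmb (m + 1))) i

@[simp]
lemma fixEnds_zero {m : ℕ} (p : Perm (Fin m)) : fixEnds p 0 = 0 := by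
  refine p.viaFintypeEmbedding_apply_notMem_range _ ?_
  rintro ⟨i, hi⟩
  exact Fin.succ_ne_zero _ hi

@[simp]
lemma fixEnds_last {m : ℕ} (p : Perm (Fin m)) :
    fixEnds p (Fin.last (m + 1)) = Fin.last (m + 1) := by
  refine p.viaFintypeEmbedding_apply_notMem_range _ ?_
  rintro ⟨i, hi⟩
  exact i.castSucc_ne_last (Fin.succ_injective _ hi)

lemma linearTree_comp_fixEnds {m : ℕ} (x : Fin (m + 2) → L) (p : Perm (Fin m)) :
    linearTree κ (x ∘ fixEnds p) =
      κ (iteratedLie R (List.ofFn ((fun i => x i.castSucc.succ) ∘ p)) (x 0))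
        (x (Fin.last (m + 1))) := by
  simp [linearTree, Function.comp_def]

lemma IsSymmInvariant.linearTree_comp_perm_mem_span (hκ : IsSymmInvariant κ) {m : ℕ}
    (x : Fin (m + 2) → L) (σ : Perm (Fin (m + 2))) :
    linearTree κ (x ∘ σ) ∈
      span R (Set.range fun p : Perm (Fin m) => linearTree κ (x ∘ fixEnds p)) := by
  have mem_treeSpan : linearTree κ (x ∘ σ) ∈ treeSpan κ (x (σ 0)) (x (σ (Fin.last (m + 1))))
      (List.ofFn fun i => x (σ i.castSucc.succ)) :=
    Submodule.mem_map_of_mem (iteratedLie_mem_bracketSpan (.refl _))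
  have same_legs := (ofFn_perm_ends_cons x).symm.trans
    ((σ.ofFn_comp_perm x).symm.trans (ofFn_perm_ends_cons (x ∘ σ)))
  refine (?_ : treeSpan κ _ _ _ ≤ _) (hκ.treeSpan_le_of_perm same_legs mem_treeSpan)
  rw [treeSpan, bracketSpan, Submodule.map_span, span_le]
  rintro _ ⟨_, ⟨l, hl, rfl⟩, rfl⟩
  obtain ⟨m, g, rfl⟩ : ∃ m, ∃ g : Fin m → L, l = List.ofFn g := ⟨_, l.get, (List.ofFn_get l).symm⟩
  obtain rfl : m = _ := by simpa using hl.length_eq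
  obtain ⟨p, rfl⟩ := exists_perm_eq_comp_of_ofFn_perm hl
  exact subset_span ⟨p, linearTree_comp_fixEnds x p⟩

end LinearTree

section TreeForm

variable {R L M : Type*} [CommRing R] [LieRing L] [LieAlgebra R L] [AddCommGroup M] [Module R M]

/-- The linear tree whose legs are labelled by `σ`, as a function of the elements attached to the
labels. -/
def treeForm (κ : L →ₗ[R] L →ₗ[R] M) {m : ℕ} (σ : Perm (Fin (m + 2))) : (Fin (m + 2) → L) → M :=
  fun x => linearTree κ (x ∘ σ)

/-- The linear trees with end legs labelled `0` and `m + 1`. -/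
def combForm (κ : L →ₗ[R] L →ₗ[R] M) {m : ℕ} (p : Perm (Fin m)) : (Fin (m + 2) → L) → M :=
  treeForm κ (fixEnds p)

/-- The family of all pullbacks of `κ` along evaluations of the free Lie algebra, as one bilinear
map. It turns identities between linear trees that hold for all arguments into identities in the
free Lie algebra. -/
def freePairing (κ : L →ₗ[R] L →ₗ[R] M) (ι : Type*) :
    FreeLieAlgebra R ι →ₗ[R] FreeLieAlgebra R ι →ₗ[R] ((ι → L) → M) :=
  LinearMap.mk₂ R (fun a b x => κ (FreeLieAlgebra.lift R x a) (FreeLieAlgebra.lift R x b))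
    (fun _ _ _ => by ext; simp) (fun _ _ _ => by ext; simp)
    (fun _ _ _ => by ext; simp) (fun _ _ _ => by ext; simp)

variable {κ : L →ₗ[R] L →ₗ[R] M}

lemma combForm_apply {m : ℕ} (p : Perm (Fin m)) (x : Fin (m + 2) → L) :
    combForm κ p x =
      κ (iteratedLie R (List.ofFn ((fun i => x i.castSucc.succ) ∘ p)) (x 0))
        (x (Fin.last (m + 1))) :=
  linearTree_comp_fixEnds x p

lemma IsSymmInvariant.freePairing (hκ : IsSymmInvariant κ) (ι : Type*) :
    IsSymmInvariant (freePairing κ ι) where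
  symm _ _ := funext fun _ => hκ.symm _ _
  lie_left _ _ _ := funext fun _ => by simp [_root_.freePairing, hκ.lie_left]

lemma linearTree_freePairing {m : ℕ} (σ : Perm (Fin (m + 2))) :
    linearTree (freePairing κ (Fin (m + 2))) (FreeLieAlgebra.of R ∘ σ) = treeForm κ σ := by
  ext x
  simp [linearTree, treeForm, freePairing, map_iteratedLie, List.map_ofFn, Function.comp_def]

lemma IsSymmInvariant.span_range_treeForm (hκ : IsSymmInvariant κ) (m : ℕ) :
    span R (Set.range (treeForm κ (m := m))) = span R (Set.range (combForm κ (m := m))) := by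
  refine le_antisymm (span_le.2 ?_) (Submodule.span_mono ?_)
  · rintro _ ⟨σ, rfl⟩
    have := (hκ.freePairing (Fin (m + 2))).linearTree_comp_perm_mem_span (FreeLieAlgebra.of R) σ
    simp only [linearTree_freePairing] at this
    exact this
  · rintro _ ⟨p, rfl⟩
    exact ⟨fixEnds p, rfl⟩

end TreeForm

section LinearRelations

variable {K L M : Type*} [Field K] [LieRing L] [LieAlgebra K L] [AddCommGroup M] [Module K M]

lemma sum_sign_smul_iteratedLie_eq_zero [FiniteDimensional K L] {m : ℕ} (hm : finrank K L < m)
    (u : Fin m → L) :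
    ∑ p : Perm (Fin m), Perm.sign p • iteratedLie K (List.ofFn (u ∘ p)) = 0 := by
  let nested : MultilinearMap K (fun _ : Fin m => L) (End K L)ᵐᵒᵖ :=
    (MultilinearMap.mkPiAlgebraFin K m (End K L)ᵐᵒᵖ).compLinearMap fun _ => rightAd K
  have dependent : ¬LinearIndependent K u := fun hu =>
    hm.not_ge (by simpa using hu.fintype_card_le_finrank)
  have alternatization_zero := nested.alternatization.map_linearDependent u dependent
  rw [MultilinearMap.alternatization_apply] at alternatization_zero
  simpa [nested, iteratedLie, List.map_ofFn, Function.comp_def] using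
    congrArg MulOpposite.unop alternatization_zero

lemma not_linearIndependent_combForm [FiniteDimensional K L] (κ : L →ₗ[K] L →ₗ[K] M) {m : ℕ}
    (hm : finrank K L < m) : ¬LinearIndependent K (combForm κ (m := m)) := by
  have relation : ∑ p : Perm (Fin m), ((Perm.sign p : ℤ) : K) • combForm κ p = 0 := by
    ext x
    have := congrArg (fun T : End K L => κ (T (x 0)) (x (Fin.last (m + 1))))
      (sum_sign_smul_iteratedLie_eq_zero hm fun i => x i.castSucc.succ)
    simpa [combForm_apply, Units.smul_def, LinearMap.sum_apply,
      ← Int.cast_smul_eq_zsmul K] using this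
  intro independent
  simpa using Fintype.linearIndependent_iff.1 independent _ relation 1

lemma sum_smul_eq_zero_of_sum_smul_combForm {κ : L →ₗ[K] L →ₗ[K] M} {m : ℕ}
    {c : Perm (Fin m) → K} (hc : ∑ p, c p • combForm κ p = 0) (y z : L) (w : Fin m → L)
    (q : Perm (Fin m)) :
    ∑ r, c (q * r) • κ (iteratedLie K (List.ofFn (w ∘ r)) y) z = 0 := by
  have := congrFun hc (Fin.cons y (Fin.snoc (w ∘ ⇑q⁻¹) z : Fin (m + 1) → L))
  rw [← Equiv.sum_comp (Equiv.mulLeft q)] at this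
  simpa [combForm_apply, Function.comp_def, ← Fin.succ_last] using this

lemma linearIndependent_combForm_of_unique_order {κ : L →ₗ[K] L →ₗ[K] M} {m : ℕ} (y z : L)
    (w : Fin m → L) (hw : κ (iteratedLie K (List.ofFn w) y) z ≠ 0)
    (other : ∀ r : Perm (Fin m), r ≠ 1 → κ (iteratedLie K (List.ofFn (w ∘ r)) y) z = 0) :
    LinearIndependent K (combForm κ (m := m)) := by
  refine Fintype.linearIndependent_iff.2 fun c hc q => ?_
  have := sum_smul_eq_zero_of_sum_smul_combForm hc y z w q
  rw [Fintype.sum_eq_single 1 fun r hr => by rw [other r hr, smul_zero]] at this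
  simpa [hw] using this

end LinearRelations

section Sl2Triple

variable {K L : Type*} [Field K] [LieRing L] [LieAlgebra K L] {κ : L →ₗ[K] L →ₗ[K] K} {h e f : L}

lemma iteratedLie_hfe_comp_eq_zero (t : IsSl2Triple h e f) {r : Perm (Fin 3)} (hr : r ≠ 1)
    (hr' : r ≠ finRotate 3) : iteratedLie K (List.ofFn (![h, f, e] ∘ r)) e = 0 := by
  have orders : ∀ r : Perm (Fin 3), r ≠ 1 → r ≠ finRotate 3 →
      r 0 = 2 ∨ (r 0 = 1 ∧ r 1 = 0) ∨ (r 0 = 0 ∧ r 1 = 2) := by decide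
  have lie_e_h : ⁅e, h⁆ = -(2 • e) := by rw [← lie_skew, t.lie_h_e_nsmul]
  obtain h0 | ⟨h0, h1⟩ | ⟨h0, h1⟩ := orders r hr hr' <;>
    simp [List.ofFn_succ, *, t.lie_e_f]

/- Evaluating a relation at `x₀ = e`, `x₄ = f` and inner letters `h, f, e` leaves exactly the two
orders `⁅⁅⁅e, h⁆, f⁆, e⁆ = ⁅⁅⁅e, f⁆, e⁆, h⁆ = -4e`. Hence the coefficients change sign under a
rotation of order three, and so vanish. -/
lemma linearIndependent_combForm_three (h2 : (2 : K) ≠ 0) (t : IsSl2Triple h e f)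
    (hef : κ e f ≠ 0) : LinearIndependent K (combForm κ (m := 3)) := by
  refine Fintype.linearIndependent_iff.2 fun c hc => ?_
  have lie_e_h : ⁅e, h⁆ = -((2 : K) • e) := by rw [← lie_skew, t.lie_h_e_smul K]
  have value_id : κ (iteratedLie K (List.ofFn ![h, f, e]) e) f = -(2 * 2 * κ e f) := by
    simp [List.ofFn_succ, t.lie_e_f, t.lie_h_e_smul K, lie_e_h, mul_assoc]
  have value_rotate :
      κ (iteratedLie K (List.ofFn (![h, f, e] ∘ finRotate 3)) e) f = -(2 * 2 * κ e f) := by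
    have letters : ![h, f, e] ∘ finRotate 3 = ![f, e, h] := by
      ext i
      fin_cases i <;> rfl
    simp [letters, List.ofFn_succ, t.lie_e_f, t.lie_h_e_smul K, lie_e_h, mul_assoc]
  have rotate (q : Perm (Fin 3)) : c (q * finRotate 3) = -c q := by
    have := sum_smul_eq_zero_of_sum_smul_combForm hc e f ![h, f, e] q
    rw [Fintype.sum_eq_add 1 (finRotate 3) (by decide) fun r hr => by
      rw [iteratedLie_hfe_comp_eq_zero t hr.1 hr.2, map_zero, LinearMap.zero_apply,
        smul_zero]] at this
    rw [Perm.coe_one, Function.comp_id, value_id, value_rotate, ← add_smul, mul_one] at this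
    have sum_zero : c q + c (q * finRotate 3) = 0 := by simpa [h2, hef] using this
    exact eq_neg_of_add_eq_zero_right sum_zero
  intro q
  have rotate_cubed : finRotate 3 * finRotate 3 * finRotate 3 = 1 := by decide
  have self_eq_neg : c q = -c q := by
    calc c q = c (q * finRotate 3 * finRotate 3 * finRotate 3) := by
          rw [mul_assoc, mul_assoc, ← mul_assoc (finRotate 3), rotate_cubed, mul_one]
      _ = -c q := by rw [rotate, rotate, rotate, neg_neg]
  have : 2 * c q = 0 := by linear_combination self_eq_neg
  exact (mul_eq_zero.1 this).resolve_left h2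

lemma linearIndependent_combForm_of_le_three (h2 : (2 : K) ≠ 0) (hκ : IsSymmInvariant κ)
    (t : IsSl2Triple h e f) (hef : κ e f ≠ 0) {m : ℕ} (hm : m ≤ 3) :
    LinearIndependent K (combForm κ (m := m)) := by
  interval_cases m
  · exact linearIndependent_combForm_of_unique_order e f ![] (by simpa using hef)
      fun r hr => (hr (Subsingleton.elim r 1)).elim
  · have hhh : κ h h = 2 * κ e f := by
      nth_rw 1 [← t.lie_e_f]
      rw [hκ.lie_left, ← lie_skew, t.lie_h_f_nsmul, neg_neg, map_nsmul, nsmul_eq_mul, Nat.cast_two]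
    refine linearIndependent_combForm_of_unique_order e h ![f] ?_
      fun r hr => (hr (Subsingleton.elim r 1)).elim
    simp [List.ofFn_succ, t.lie_e_f, hhh, h2, hef]
  · refine linearIndependent_combForm_of_unique_order e f ![f, e] ?_ fun r hr => ?_
    · simp [List.ofFn_succ, t.lie_e_f, t.lie_h_e_smul K, h2, hef]
    · have swapped : ∀ r : Perm (Fin 2), r ≠ 1 → r 0 = 1 := by decide
      simp [List.ofFn_succ, swapped r hr]
  · exact linearIndependent_combForm_three h2 t hef

lemma linearIndependent_combForm_iff (h2 : (2 : K) ≠ 0) (hκ : IsSymmInvariant κ)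
    (t : IsSl2Triple h e f) (hef : κ e f ≠ 0) (hL : finrank K L = 3) {m : ℕ} :
    LinearIndependent K (combForm κ (m := m)) ↔ m ≤ 3 := by
  have := FiniteDimensional.of_finrank_pos (hL ▸ three_pos)
  refine ⟨fun independent => ?_, linearIndependent_combForm_of_le_three h2 hκ t hef⟩
  contrapose! independent
  exact not_linearIndependent_combForm κ (hL.trans_lt independent)

end Sl2Triple

section SpecialLinear

lemma isSl2Triple_H_E_F : IsSl2Triple H E F where
  h_ne_zero hH := by simpa [H] using congrArg (fun x : sl2 => x.1 0 0) hH
  lie_e_f := by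
    ext i j
    fin_cases i <;> fin_cases j <;> simp [H, E, F, Ring.lie_def]
  lie_h_e_nsmul := by
    ext i j
    fin_cases i <;> fin_cases j <;> simp [H, E, Ring.lie_def, one_add_one_eq_two]
  lie_h_f_nsmul := by
    ext i j
    fin_cases i <;> fin_cases j <;> simp [H, F, Ring.lie_def]
    norm_num

lemma sl2_apply_one_one (x : sl2) : x.1 1 1 = -x.1 0 0 := by
  refine eq_neg_of_add_eq_zero_right ?_
  rw [← Matrix.trace_fin_two]
  exact x.2

lemma eq_smul_H_add_smul_E_add_smul_F (x : sl2) : x = x.1 0 0 • H + x.1 0 1 • E + x.1 1 0 • F := by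
  ext i j
  fin_cases i <;> fin_cases j <;> simp [H, E, F, sl2_apply_one_one]

/-- The basis `H, E, F` of `sl₂`. -/
def sl2Basis : Module.Basis (Fin 3) ℚ sl2 :=
  .ofEquivFun
    { toFun x := ![x.1 0 0, x.1 0 1, x.1 1 0]
      map_add' x y := by ext i; fin_cases i <;> simp
      map_smul' c x := by ext i; fin_cases i <;> simp
      invFun v := v 0 • H + v 1 • E + v 2 • F
      left_inv x := (eq_smul_H_add_smul_E_add_smul_F x).symm
      right_inv v := by ext i; fin_cases i <;> simp [H, E, F] }

lemma coe_sl2Basis : ⇑sl2Basis = ![H, E, F] := by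
  ext i : 1
  have sl2Basis_apply : sl2Basis i =
      (Pi.single i 1 : Fin 3 → ℚ) 0 • H + (Pi.single i 1 : Fin 3 → ℚ) 1 • E +
        (Pi.single i 1 : Fin 3 → ℚ) 2 • F := by
    rw [sl2Basis, Module.Basis.coe_ofEquivFun]
    rfl
  rw [sl2Basis_apply]
  fin_cases i <;> simp

lemma finrank_sl2 : finrank ℚ sl2 = 3 := by
  simpa using Module.finrank_eq_card_basis sl2Basis

/-- The trace form `(x, y) ↦ tr (x y)` on `sl₂`, the form `κ` of the theorem. -/
def sl2TraceForm : LinearMap.BilinForm ℚ sl2 :=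
  LinearMap.mk₂ ℚ (fun x y => (x.1 * y.1).trace) (by simp [add_mul]) (by simp) (by simp [mul_add])
    (by simp)

lemma sl2TraceForm_apply (x y : sl2) : sl2TraceForm x y = (x.1 * y.1).trace := rfl

lemma isSymmInvariant_sl2TraceForm : IsSymmInvariant sl2TraceForm where
  symm x y := Matrix.trace_mul_comm x.1 y.1
  lie_left x y z := by
    simp only [sl2TraceForm_apply, LieSubalgebra.coe_bracket, Ring.lie_def, sub_mul, mul_sub,
      Matrix.trace_sub, mul_assoc]
    rw [← Matrix.trace_mul_cycle' x.1 z.1 y.1]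

lemma sl2TraceForm_nondegenerate : sl2TraceForm.Nondegenerate := by
  have refl : sl2TraceForm.IsRefl := fun x y hxy =>
    (isSymmInvariant_sl2TraceForm.symm y x).trans hxy
  refine refl.nondegenerate_iff_separatingLeft.2 fun x hx => ?_
  have h00 : x.1 0 0 = 0 := by
    simpa [sl2TraceForm_apply, H, Matrix.trace_fin_two, Matrix.mul_apply, sl2_apply_one_one]
      using hx H
  have h01 : x.1 0 1 = 0 := by
    simpa [sl2TraceForm_apply, F, Matrix.trace_fin_two, Matrix.mul_apply] using hx F
  have h10 : x.1 1 0 = 0 := by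
    simpa [sl2TraceForm_apply, E, Matrix.trace_fin_two, Matrix.mul_apply] using hx E
  rw [eq_smul_H_add_smul_E_add_smul_F x, h00, h01, h10]
  simp

lemma eq_sl2TraceForm {κ : sl2 →ₗ[ℚ] sl2 →ₗ[ℚ] ℚ}
    (hHH : κ H H = 2) (hEF : κ E F = 1) (hFE : κ F E = 1)
    (hHE : κ H E = 0) (hEH : κ E H = 0) (hHF : κ H F = 0) (hFH : κ F H = 0)
    (hEE : κ E E = 0) (hFF : κ F F = 0) : κ = sl2TraceForm := by
  refine LinearMap.ext_basis sl2Basis sl2Basis fun i j => ?_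
  rw [coe_sl2Basis]
  fin_cases i <;> fin_cases j <;>
    simp [*] <;> simp [sl2TraceForm_apply, H, E, F, Matrix.trace_fin_two, one_add_one_eq_two]

end SpecialLinear

section TensorPairing

/-- The map sending a tensor to the multilinear form it represents under `κ^{⊗n}`. -/
def tensorPairing (κ : sl2 →ₗ[ℚ] sl2 →ₗ[ℚ] ℚ) (n : ℕ) : TP n →ₗ[ℚ] ((Fin n → sl2) → ℚ) :=
  LinearMap.pi (pairT κ n)

lemma pairT_basis {κ : LinearMap.BilinForm ℚ sl2} (hκ : κ.Nondegenerate) {ι : Type*} [Finite ι]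
    [DecidableEq ι] (b : Module.Basis ι ℚ sl2) {n : ℕ} (p : Fin n → ι) :
    pairT κ n (b ∘ p) = (Basis.piTensorProduct fun _ : Fin n => κ.dualBasis hκ b).coord p := by
  ext x
  simp [pairT, Basis.piTensorProduct_repr_tprod_apply]

lemma tensorPairing_injective {κ : LinearMap.BilinForm ℚ sl2} (hκ : κ.Nondegenerate) (n : ℕ) :
    Function.Injective (tensorPairing κ n) := by
  intro s t hst
  refine (Basis.piTensorProduct fun _ : Fin n => κ.dualBasis hκ sl2Basis).ext_elem fun p => ?_
  rw [← Module.Basis.coord_apply, ← Module.Basis.coord_apply, ← pairT_basis]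
  exact congrFun hst (sl2Basis ∘ p)

lemma brkVal_eq_linearTree (κ : sl2 →ₗ[ℚ] sl2 →ₗ[ℚ] ℚ) {m : ℕ} (x : Fin (m + 2) → sl2) :
    brkVal κ x = linearTree κ x := by
  rw [brkVal, linearTree, List.ofFn_succ, List.ofFn_succ', List.concat_eq_append,
    ← List.cons_append, List.dropLast_concat, List.getLastD_concat, iteratedLie_eq_foldl]
  rfl

lemma finrank_span_of_tensorPairing_eq {κ : LinearMap.BilinForm ℚ sl2} (hκ : κ.Nondegenerate)
    {ι : Type*} {n : ℕ} {t : ι → TP n} {g : ι → (Fin n → sl2) → ℚ}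
    (ht : ∀ i, tensorPairing κ n (t i) = g i) :
    finrank ℚ (span ℚ (Set.range t)) = finrank ℚ (span ℚ (Set.range g)) := by
  obtain rfl : tensorPairing κ n ∘ t = g := funext ht
  rw [Set.range_comp, ← Submodule.map_span]
  exact (Submodule.equivMapOfInjective _ (tensorPairing_injective hκ n) _).finrank_eq

end TensorPairing

theorem span_linear_tree_tensors_finrank_iff
    (κ : sl2 →ₗ[ℚ] sl2 →ₗ[ℚ] ℚ)
    (hHH : κ H H = 2) (hEF : κ E F = 1) (hFE : κ F E = 1)
    (hHE : κ H E = 0) (hEH : κ E H = 0) (hHF : κ H F = 0) (hFH : κ F H = 0)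
    (hEE : κ E E = 0) (hFF : κ F F = 0) :
    ∀ n, 2 ≤ n →
    ∀ t : Equiv.Perm (Fin n) → TP n,
      (∀ σ (x : Fin n → sl2), pairT κ n x (t σ) = brkVal κ (x ∘ σ)) →
      (Module.finrank ℚ (Submodule.span ℚ (Set.range t)) = Nat.factorial (n - 2)
        ↔ n ≤ 5) := by
  intro n hn t ht
  obtain ⟨m, rfl⟩ := Nat.exists_eq_add_of_le' hn
  obtain rfl := eq_sl2TraceForm hHH hEF hFE hHE hEH hHF hFH hEE hFF
  have pairing_eq (σ : Perm (Fin (m + 2))) :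
      tensorPairing sl2TraceForm (m + 2) (t σ) = treeForm sl2TraceForm σ :=
    funext fun x => (ht σ x).trans (brkVal_eq_linearTree _ _)
  rw [finrank_span_of_tensorPairing_eq sl2TraceForm_nondegenerate pairing_eq,
    isSymmInvariant_sl2TraceForm.span_range_treeForm, Nat.add_sub_cancel]
  calc finrank ℚ (span ℚ (Set.range (combForm sl2TraceForm (m := m)))) = m.factorial
    _ ↔ LinearIndependent ℚ (combForm sl2TraceForm (m := m)) := by
      rw [linearIndependent_iff_card_eq_finrank_span, Fintype.card_perm, Fintype.card_fin, eq_comm]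
      rfl
    _ ↔ m ≤ 3 := linearIndependent_combForm_iff two_ne_zero isSymmInvariant_sl2TraceForm
      isSl2Triple_H_E_F (hEF ▸ one_ne_zero) finrank_sl2
    _ ↔ m + 2 ≤ 5 := by omega
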